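/- arXiv:1104.3444 — 3 statements merged into one kernel-verified Lean document; each statement's English description precedes it below -/
import Mathlib

section
/- Let X be a finite set with a distinguished subset of labelled singletons determining π_X. Then Π_l(X,π_X)₀ = {π ∈ Π_l(X,π_X) : λ(π) ≠ 0} consists exactly of the labelled set partitions π ∈ Π_l(X,π_X) with at most one unlabelled block, and for every π ∈ Π_l(X,π_X)₀ one has λ(π) = μ_{Π_l(X)}(π, π*), where π* is the smallest labelled set partition with at most one labelled block satisfying π* ≥ π (i.e., π* arises from π by merging all labelled blocks of π into a single labelled block). -/
open scoped Classical

noncomputable section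

/-! ## Labelled set partitions -/

/-- A labelled set partition of a finite set `α`: a set partition of `α` (encoded as the
equivalence relation `rel` whose classes are the blocks) in which each block either carries
the label `l` or not (a point `x` lies in `lab` iff the block of `x` is labelled). -/
@[ext]
structure LPart (α : Type*) where
  rel : Setoid α
  lab : Set α
  lab_mem : ∀ ⦃x y : α⦄, rel x y → (x ∈ lab ↔ y ∈ lab)

namespace LPart

variable {α : Type*}

/-- `σ ≤ π` iff every block of `σ` (together with its label) is contained in a block of `π`. -/
instance : PartialOrder (LPart α) where
  le σ π := σ.rel ≤ π.rel ∧ σ.lab ⊆ π.lab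
  le_refl σ := ⟨le_rfl, subset_rfl⟩
  le_trans _ _ _ h h' := ⟨h.1.trans h'.1, h.2.trans h'.2⟩
  le_antisymm σ π h h' := LPart.ext (le_antisymm h.1 h'.1) (le_antisymm h.2 h'.2)

/-- The join (smallest common coarsening) of two labelled set partitions: the join of the
underlying partitions, a block being labelled iff it contains a labelled block of one of the
two partitions. -/
def sup (σ π : LPart α) : LPart α where
  rel := σ.rel ⊔ π.rel
  lab := {x | ∃ y, (σ.rel ⊔ π.rel) x y ∧ (y ∈ σ.lab ∨ y ∈ π.lab)}
  lab_mem := by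
    intro x y h
    constructor
    · rintro ⟨z, hz, hl⟩
      exact ⟨z, (σ.rel ⊔ π.rel).iseqv.trans ((σ.rel ⊔ π.rel).iseqv.symm h) hz, hl⟩
    · rintro ⟨z, hz, hl⟩
      exact ⟨z, (σ.rel ⊔ π.rel).iseqv.trans h hz, hl⟩

instance _root_.Setoid.finite [Finite α] : Finite (Setoid α) :=
  Finite.of_injective (fun s : Setoid α => ⇑s) fun _ _ h => Setoid.eq_iff_rel_eq.2 h

instance [Finite α] : Finite (LPart α) :=
  Finite.of_injective (fun π : LPart α => (π.rel, π.lab))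
    (fun a b h => by
      cases a; cases b
      simpa [LPart.mk.injEq] using h)

instance fintype [Finite α] : Fintype (LPart α) := Fintype.ofFinite _

/-- `π` has exactly one labelled block. -/
def OneLab (π : LPart α) : Prop :=
  π.lab.Nonempty ∧ ∀ x ∈ π.lab, ∀ y ∈ π.lab, π.rel x y

/-- The indicator `m(π)` that `π` has exactly one labelled block. -/
def m (π : LPart α) : ℝ := if π.OneLab then 1 else 0

/-- The labelled set partition `π_X` into singleton blocks, the singleton `{x}` being
labelled iff `x ∈ K`. -/
def piX (K : Set α) : LPart α :=
  ⟨⊥, K, fun x y h => by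
    have : x = y := by
      have := Setoid.bot_def (α := α)
      exact congrFun (congrFun this x) y ▸ h
    rw [this]⟩

end LPart

/-- The Möbius function of a finite poset (the unique `μ` with `μ ⋆ ζ = δ`),
evaluated at a pair of elements. -/
def mobius {P : Type*} [Fintype P] [PartialOrder P] (x y : P) : ℝ :=
  letI : LocallyFiniteOrder P := Fintype.toLocallyFiniteOrder
  IncidenceAlgebra.mu ℝ x y

/-- The state set `Π_l(X, π_X)`: all labelled set partitions `π ≥ π_X` having at least one
labelled block. -/
abbrev LStates (α : Type*) (K : Set α) : Type _ :=
  {π : LPart α // LPart.piX K ≤ π ∧ π.lab.Nonempty}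

noncomputable instance {α : Type*} [Finite α] (K : Set α) : Fintype (LStates α K) :=
  Fintype.ofFinite _

/-- `λ(π) = ∑_{σ ∈ Π_l(X,π_X), σ ≥ π} μ_{Π_l(X)}(π, σ) m(σ)`. -/
def lamda {α : Type*} [Finite α] (K : Set α) (π : LPart α) : ℝ :=
  letI : Fintype (LPart α) := LPart.fintype
  ∑ σ : LStates α K, if π ≤ σ.1 then mobius π σ.1 * LPart.m σ.1 else 0

/-- `π*`: the labelled set partition arising from `π` by merging all labelled blocks of `π`
into a single labelled block; it is the smallest labelled set partition with at most one
labelled block lying above `π`. -/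
def LPart.piStar {α : Type*} (π : LPart α) : LPart α where
  rel := ⟨fun a b => π.rel a b ∨ (a ∈ π.lab ∧ b ∈ π.lab), by
    constructor
    · exact fun a => Or.inl (π.rel.iseqv.refl a)
    · rintro a b (h | ⟨ha, hb⟩)
      · exact Or.inl (π.rel.iseqv.symm h)
      · exact Or.inr ⟨hb, ha⟩
    · rintro a b c (hab | ⟨ha, hb⟩) (hbc | ⟨hb', hc⟩)
      · exact Or.inl (π.rel.iseqv.trans hab hbc)
      · exact Or.inr ⟨(π.lab_mem hab).2 hb', hc⟩
      · exact Or.inr ⟨ha, (π.lab_mem hbc).1 hb⟩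
      · exact Or.inr ⟨ha, hc⟩⟩
  lab := π.lab
  lab_mem := by
    rintro x y (h | ⟨hx, hy⟩)
    · exact π.lab_mem h
    · exact iff_of_true hx hy

/-- `π` has at most one unlabelled block. -/
def LPart.AtMostOneUnlab {α : Type*} (π : LPart α) : Prop :=
  ∀ x y : α, x ∉ π.lab → y ∉ π.lab → π.rel x y

/-! ## Möbius inversion -/

lemma mobius_sum_right {P : Type*} [Fintype P] [PartialOrder P] (x y : P) :
    (∑ z : P, if x ≤ z ∧ z ≤ y then mobius x z else 0) = if x = y then 1 else 0 := by
  letI : LocallyFiniteOrder P := Fintype.toLocallyFiniteOrder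
  rw [← Finset.sum_filter]
  have h := IncidenceAlgebra.sum_Icc_mu_right (𝕜 := ℝ) x y
  rw [← h]
  refine Finset.sum_congr ?_ fun z _ => rfl
  ext z
  simp

lemma mobius_sum_left {P : Type*} [Fintype P] [PartialOrder P] (x y : P) :
    (∑ z : P, if x ≤ z ∧ z ≤ y then mobius z y else 0) = if x = y then 1 else 0 := by
  letI : LocallyFiniteOrder P := Fintype.toLocallyFiniteOrder
  rw [← Finset.sum_filter]
  have h := IncidenceAlgebra.sum_Icc_mu_left (𝕜 := ℝ) x y
  rw [← h]
  refine Finset.sum_congr ?_ fun z _ => rfl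
  ext z
  simp

lemma mobius_inversion {P : Type*} [Fintype P] [PartialOrder P] (g f : P → ℝ) (p : P)
    (h : ∀ s, p ≤ s → (∑ t : P, if s ≤ t then g t else 0) = f s) :
    (∑ s : P, if p ≤ s then mobius p s * f s else 0) = g p := by
  have h1 : ∀ s : P, (if p ≤ s then mobius p s * f s else 0)
      = ∑ t : P, g t * (if p ≤ s ∧ s ≤ t then mobius p s else 0) := by
    intro s
    split_ifs with hs
    · rw [← h s hs, Finset.mul_sum]
      refine Finset.sum_congr rfl fun t _ => ?_
      by_cases hst : s ≤ t <;> simp [hs, hst, mul_comm]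
    · simp [hs]
  simp_rw [h1]
  rw [Finset.sum_comm]
  simp_rw [← Finset.mul_sum, mobius_sum_right]
  simp

/-! ## Counting functions by kernel -/

lemma card_respecting {β : Type*} [Finite β] (s : Setoid β) (q : ℕ) :
    Nat.card {f : β → Fin q // ∀ x y, s x y → f x = f y} = q ^ Nat.card (Quotient s) := by
  have e : {f : β → Fin q // ∀ x y, s x y → f x = f y} ≃ (Quotient s → Fin q) :=
    { toFun := fun f => Quotient.lift f.1 (fun x y h => f.2 x y h)
      invFun := fun g => ⟨fun x => g (Quotient.mk s x), fun x y h => 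
        congrArg g (Quotient.sound (s := s) h)⟩
      left_inv := fun f => by ext x; rfl
      right_inv := fun g => by
        funext x
        induction x using Quotient.inductionOn with
        | h a => rfl }
  rw [Nat.card_congr e, Nat.card_fun]
  simp

lemma card_kernel {β : Type*} [Finite β] (s : Setoid β) (q : ℕ) :
    Nat.card {f : β → Fin q // ∀ x y, s x y ↔ f x = f y}
      = q.descFactorial (Nat.card (Quotient s)) := by
  have e : {f : β → Fin q // ∀ x y, s x y ↔ f x = f y} ≃ (Quotient s ↪ Fin q) :=
    { toFun := fun f => ⟨Quotient.lift f.1 (fun x y h => (f.2 x y).1 h), by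
        intro x y
        induction x using Quotient.inductionOn with
        | h a =>
          induction y using Quotient.inductionOn with
          | h b => exact fun hab => Quotient.sound ((f.2 a b).2 hab)⟩
      invFun := fun g => ⟨fun x => g (Quotient.mk s x), fun x y =>
        ⟨fun h => congrArg g (Quotient.sound (s := s) h), fun h => Quotient.exact (g.injective h)⟩⟩
      left_inv := fun f => by ext x; rfl
      right_inv := fun g => by
        ext x
        induction x using Quotient.inductionOn with
        | h a => rfl }
  haveI : Fintype (Quotient s) := Fintype.ofFinite _
  rw [Nat.card_congr e, Nat.card_eq_fintype_card, Fintype.card_embedding_eq,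
    Nat.card_eq_fintype_card, Fintype.card_fin]

namespace LPart

variable {α : Type*}

lemma le_def (s t : LPart α) :
    s ≤ t ↔ (∀ a b, s.rel a b → t.rel a b) ∧ s.lab ⊆ t.lab :=
  ⟨fun h => ⟨fun _ _ hab => h.1 hab, h.2⟩, fun h => ⟨fun {a b} hab => h.1 a b hab, h.2⟩⟩

lemma piStar_rel (p : LPart α) (a b : α) :
    p.piStar.rel a b ↔ (p.rel a b ∨ (a ∈ p.lab ∧ b ∈ p.lab)) := Iff.rfl

lemma piStar_lab (p : LPart α) : p.piStar.lab = p.lab := rfl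

lemma ext' {s t : LPart α} (h : ∀ a b, s.rel a b ↔ t.rel a b) (h' : s.lab = t.lab) : s = t :=
  LPart.ext (Setoid.ext h) h'

/-- Number of labelled blocks, measured on a given set `L`. -/
def nb (L : Set α) (s : LPart α) : ℕ := Nat.card (Quotient (s.rel.comap (Subtype.val : L → α)))

/-- Coarsening of `p` inside the labelled part given by a function. -/
def ofFun (p : LPart α) {q : ℕ} (f : p.lab → Fin q)
    (hf : ∀ x y : p.lab, p.rel x y → f x = f y) : LPart α where
  rel := ⟨fun a b => p.rel a b ∨ ∃ (ha : a ∈ p.lab) (hb : b ∈ p.lab), f ⟨a, ha⟩ = f ⟨b, hb⟩, by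
    constructor
    · exact fun a => Or.inl (p.rel.iseqv.refl a)
    · rintro a b (h | ⟨ha, hb, h⟩)
      · exact Or.inl (p.rel.iseqv.symm h)
      · exact Or.inr ⟨hb, ha, h.symm⟩
    · rintro a b c (hab | ⟨ha, hb, hab⟩) (hbc | ⟨hb', hc, hbc⟩)
      · exact Or.inl (p.rel.iseqv.trans hab hbc)
      · have ha := (p.lab_mem hab).2 hb'
        exact Or.inr ⟨ha, hc, (hf ⟨a, ha⟩ ⟨b, hb'⟩ hab).trans hbc⟩
      · have hc := (p.lab_mem hbc).1 hb
        exact Or.inr ⟨ha, hc, hab.trans (hf ⟨b, hb⟩ ⟨c, hc⟩ hbc)⟩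
      · exact Or.inr ⟨ha, hc, hab.trans hbc⟩⟩
  lab := p.lab
  lab_mem := by
    rintro x y (h | ⟨hx, hy, _⟩)
    · exact p.lab_mem h
    · exact iff_of_true hx hy

lemma ofFun_rel (p : LPart α) {q : ℕ} (f : p.lab → Fin q)
    (hf : ∀ x y : p.lab, p.rel x y → f x = f y) (a b : α) :
    (p.ofFun f hf).rel a b ↔
      (p.rel a b ∨ ∃ (ha : a ∈ p.lab) (hb : b ∈ p.lab), f ⟨a, ha⟩ = f ⟨b, hb⟩) := Iff.rfl

lemma lab_eq_of_mem {p s : LPart α} (h : p ≤ s) (h' : s ≤ p.piStar) : s.lab = p.lab :=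
  le_antisymm h'.2 h.2

/-- Existence and uniqueness of the kernel. -/
lemma kernel_unique {p s : LPart α} (h : p ≤ s) (h' : s ≤ p.piStar) {q : ℕ} (f : p.lab → Fin q)
    (hf : ∀ x y : p.lab, s.rel x y → f x = f y) :
    ∃! t : LPart α, (s ≤ t ∧ t ≤ p.piStar) ∧ ∀ x y : p.lab, t.rel x y ↔ f x = f y := by
  rw [le_def] at h h'
  have hpf : ∀ x y : p.lab, p.rel x y → f x = f y := fun x y hxy => hf x y (h.1 _ _ hxy)
  refine ⟨p.ofFun f hpf, ⟨⟨?_, ?_⟩, ?_⟩, ?_⟩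
  · rw [le_def]
    refine ⟨fun a b hab => ?_, h'.2⟩
    rcases h'.1 a b hab with h1 | ⟨ha, hb⟩
    · exact Or.inl h1
    · exact Or.inr ⟨ha, hb, hf ⟨a, ha⟩ ⟨b, hb⟩ hab⟩
  · rw [le_def]
    refine ⟨fun a b hab => ?_, subset_rfl⟩
    rcases hab with h1 | ⟨ha, hb, _⟩
    · exact Or.inl h1
    · exact Or.inr ⟨ha, hb⟩
  · intro x y
    rw [ofFun_rel]
    constructor
    · rintro (h1 | ⟨_, _, h1⟩)
      · exact hpf x y h1
      · exact h1
    · exact fun h1 => Or.inr ⟨x.2, y.2, h1⟩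
  · rintro t ⟨⟨h1, h2⟩, h3⟩
    rw [le_def] at h1 h2
    refine ext' (fun a b => ?_) (le_antisymm h2.2 (h.2.trans h1.2))
    rw [ofFun_rel]
    constructor
    · intro hab
      rcases h2.1 a b hab with h4 | ⟨ha, hb⟩
      · exact Or.inl h4
      · exact Or.inr ⟨ha, hb, (h3 ⟨a, ha⟩ ⟨b, hb⟩).1 hab⟩
    · rintro (h4 | ⟨ha, hb, h4⟩)
      · exact h1.1 _ _ (h.1 _ _ h4)
      · exact (h3 ⟨a, ha⟩ ⟨b, hb⟩).2 h4

lemma sum_descFactorial [Finite α] {p s : LPart α} (h : p ≤ s) (h' : s ≤ p.piStar) (q : ℕ) :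
    (∑ t : LPart α, if s ≤ t ∧ t ≤ p.piStar then q.descFactorial (nb p.lab t) else 0)
      = q ^ nb p.lab s := by
  rw [← Finset.sum_filter]
  unfold nb
  haveI : Fintype p.lab := Fintype.ofFinite _
  rw [← card_respecting]
  simp_rw [← card_kernel]
  simp_rw [Nat.card_eq_fintype_card, Fintype.card_subtype]
  rw [← Finset.card_biUnion]
  · congr 1
    ext f
    simp only [Finset.mem_biUnion, Finset.mem_filter, Finset.mem_univ, true_and]
    constructor
    · rintro ⟨t, ⟨h1, _⟩, h3⟩ x y hxy
      exact (h3 x y).1 (h1.1 hxy)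
    · intro hf
      exact (kernel_unique h h' f hf).exists
  · intro t ht t' ht' hne
    simp only [Finset.coe_filter, Finset.mem_univ, true_and, Set.mem_setOf_eq] at ht ht'
    rw [Function.onFun, Finset.disjoint_left]
    intro f hf hf'
    simp only [Finset.mem_filter, Finset.mem_univ, true_and] at hf hf'
    exact hne ((kernel_unique h h' f fun x y hxy => (hf x y).1 (ht.1.1 hxy)).unique
      ⟨ht, hf⟩ ⟨ht', hf'⟩)

open Polynomial in
lemma sum_descPochhammer [Finite α] {p s : LPart α} (h : p ≤ s) (h' : s ≤ p.piStar) :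
    (∑ t : LPart α, if s ≤ t ∧ t ≤ p.piStar then descPochhammer ℝ (nb p.lab t) else 0)
      = X ^ nb p.lab s := by
  apply eq_of_infinite_eval_eq
  refine Set.Infinite.mono ?_ (Set.infinite_range_of_injective (Nat.cast_injective (R := ℝ)))
  rintro _ ⟨q, rfl⟩
  simp only [Set.mem_setOf_eq, eval_finset_sum, eval_pow, eval_X]
  have := congrArg (Nat.cast (R := ℝ)) (sum_descFactorial h h' q)
  push_cast at this
  rw [← this]
  refine Finset.sum_congr rfl fun t _ => ?_
  split_ifs
  · rw [descPochhammer_eval_eq_descFactorial]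
  · simp

lemma nb_eq_one [Finite α] {p s : LPart α} (h : p ≤ s) (h' : s ≤ p.piStar)
    (hp : p.lab.Nonempty) : nb p.lab s = 1 ↔ s = p.piStar := by
  unfold nb
  rw [Nat.card_eq_one_iff_unique]
  constructor
  · rintro ⟨h1, _⟩
    refine le_antisymm h' ?_
    rw [le_def]
    refine ⟨?_, h.2⟩
    rintro a b (hab | ⟨ha, hb⟩)
    · exact h.1 hab
    · have h2 := Quotient.exact (h1.elim
        (Quotient.mk (s.rel.comap (Subtype.val : p.lab → α)) ⟨a, ha⟩) (Quotient.mk _ ⟨b, hb⟩))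
      exact h2
  · rintro rfl
    refine ⟨⟨fun x y => ?_⟩, ?_⟩
    · induction x using Quotient.inductionOn with
      | h a =>
        induction y using Quotient.inductionOn with
        | h b => exact Quotient.sound (Or.inr ⟨a.2, b.2⟩)
    · obtain ⟨x, hx⟩ := hp
      exact ⟨Quotient.mk _ ⟨x, hx⟩⟩

open Polynomial in
lemma coeff_one_ne_zero (n : ℕ) (hn : n ≠ 0) : (descPochhammer ℝ n).coeff 1 ≠ 0 := by
  obtain ⟨k, rfl⟩ := Nat.exists_eq_succ_of_ne_zero hn
  rw [Nat.succ_eq_add_one, descPochhammer_succ_left, coeff_X_mul, coeff_zero_eq_eval_zero,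
    eval_comp, descPochhammer_eval_eq_prod_range, Finset.prod_ne_zero_iff]
  intro j _
  have : (0 : ℝ) ≤ j := Nat.cast_nonneg j
  simp only [eval_sub, eval_X, eval_one]
  linarith

open Polynomial in
lemma mobius_piStar_ne_zero [Finite α] (p : LPart α) (hp : p.lab.Nonempty) :
    mobius p p.piStar ≠ 0 := by
  have hps : p ≤ p.piStar := by
    rw [le_def]
    exact ⟨fun a b hab => Or.inl hab, subset_rfl⟩
  have key := mobius_inversion
    (fun t : LPart α => if t ≤ p.piStar then (descPochhammer ℝ (nb p.lab t)).coeff 1 else 0)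
    (fun s => if s = p.piStar then 1 else 0) p (by
      intro s hs
      by_cases h' : s ≤ p.piStar
      · have := congrArg (fun P => coeff P 1) (sum_descPochhammer hs h')
        simp only [finset_sum_coeff, coeff_X_pow] at this
        simp only [← nb_eq_one hs h' hp]
        rw [eq_comm] at this
        simp only [eq_comm (a := 1)] at this
        rw [this]
        refine Finset.sum_congr rfl fun t _ => ?_
        by_cases h1 : s ≤ t <;> by_cases h2 : t ≤ p.piStar <;> simp [h1, h2]
      · rw [if_neg (fun h => h' h.le)]
        refine Finset.sum_eq_zero fun t _ => ?_
        by_cases h1 : s ≤ t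
        · rw [if_pos h1, if_neg (fun h => h' (h1.trans h))]
        · rw [if_neg h1])
  rw [Finset.sum_eq_single p.piStar (by intro b _ hb; simp [hb]) (by simp)] at key
  simp only [hps, if_true, mul_one] at key
  rw [key]
  refine coeff_one_ne_zero _ ?_
  unfold nb
  obtain ⟨x, hx⟩ := hp
  haveI : Nonempty (Quotient (p.rel.comap (Subtype.val : p.lab → α))) :=
    ⟨Quotient.mk _ ⟨x, hx⟩⟩
  exact Nat.card_pos.ne'

/-- The coarsening of `s` whose labelled part is `A` and whose unlabelled part is one block. -/
def collapse (s : LPart α) (A : Set α) (hA : ∀ x y, s.rel x y → (x ∈ A ↔ y ∈ A)) : LPart α where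
  rel := ⟨fun a b => s.rel a b ∨ (a ∉ A ∧ b ∉ A), by
    constructor
    · exact fun a => Or.inl (s.rel.iseqv.refl a)
    · rintro a b (h | ⟨ha, hb⟩)
      · exact Or.inl (s.rel.iseqv.symm h)
      · exact Or.inr ⟨hb, ha⟩
    · rintro a b c (hab | ⟨ha, hb⟩) (hbc | ⟨hb', hc⟩)
      · exact Or.inl (s.rel.iseqv.trans hab hbc)
      · exact Or.inr ⟨fun h => hb' ((hA _ _ hab).1 h), hc⟩
      · exact Or.inr ⟨ha, fun h => hb ((hA _ _ hbc).2 h)⟩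
      · exact Or.inr ⟨ha, hc⟩⟩
  lab := A
  lab_mem := by
    rintro x y (h | ⟨hx, hy⟩)
    · exact hA x y h
    · exact iff_of_false hx hy

lemma collapse_rel (s : LPart α) (A : Set α) (hA : ∀ x y, s.rel x y → (x ∈ A ↔ y ∈ A)) (a b : α) :
    (s.collapse A hA).rel a b ↔ (s.rel a b ∨ (a ∉ A ∧ b ∉ A)) := Iff.rfl

lemma mem_collapse (s : LPart α) (A : Set α) (hA : ∀ x y, s.rel x y → (x ∈ A ↔ y ∈ A))
    (hs : s.lab ⊆ A) (t : LPart α) :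
    (t.lab = A ∧ s ≤ t ∧ t.AtMostOneUnlab) ↔
      (s.collapse A hA ≤ t ∧ t ≤ (s.collapse A hA).piStar) := by
  simp only [le_def, piStar_rel, collapse_rel, piStar_lab]
  constructor
  · rintro ⟨rfl, ⟨h1, h2⟩, h3⟩
    refine ⟨⟨?_, subset_rfl⟩, ⟨?_, subset_rfl⟩⟩
    · rintro a b (h | ⟨ha, hb⟩)
      · exact h1 a b h
      · exact h3 a b ha hb
    · intro a b hab
      have := t.lab_mem hab
      by_cases ha : a ∈ t.lab
      · exact Or.inr ⟨ha, this.1 ha⟩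
      · exact Or.inl (Or.inr ⟨ha, fun h => ha (this.2 h)⟩)
  · rintro ⟨⟨h1, h2⟩, h3, h4⟩
    have hlab : t.lab = A := le_antisymm h4 h2
    refine ⟨hlab, ⟨fun a b h => h1 a b (Or.inl h), hs.trans h2⟩, fun a b ha hb => ?_⟩
    rw [hlab] at ha hb
    exact h1 a b (Or.inr ⟨ha, hb⟩)

lemma piStar_collapse (s : LPart α) (A : Set α) (hA : ∀ x y, s.rel x y → (x ∈ A ↔ y ∈ A))
    (t : LPart α) (h1 : s.collapse A hA ≤ t) (h2 : t ≤ (s.collapse A hA).piStar) :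
    t.piStar = (s.collapse A hA).piStar := by
  have hlab : t.lab = A := le_antisymm h2.2 h1.2
  rw [le_def] at h1 h2
  refine ext' (fun a b => ?_) hlab
  rw [piStar_rel, hlab]
  constructor
  · rintro (h | h)
    · exact h2.1 a b h
    · exact Or.inr h
  · rintro (h | h)
    · exact Or.inl (h1.1 a b h)
    · exact Or.inr h

/-- The candidate value of `λ`. -/
def gval [Finite α] (t : LPart α) : ℝ := if t.AtMostOneUnlab then mobius t t.piStar else 0

lemma sum_gval_fiber [Finite α] (s : LPart α) (hs : s.lab.Nonempty) (A : Set α) :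
    (∑ t : LPart α, if t.lab = A ∧ s ≤ t then gval t else 0)
      = if A = s.lab then s.m else 0 := by
  have h0 : ∀ t : LPart α, (if t.lab = A ∧ s ≤ t then gval t else 0)
      = if t.lab = A ∧ s ≤ t ∧ t.AtMostOneUnlab then mobius t t.piStar else 0 := by
    intro t
    unfold gval
    by_cases h1 : t.lab = A <;> by_cases h2 : s ≤ t <;> by_cases h3 : t.AtMostOneUnlab <;>
      simp [h1, h2, h3]
  simp_rw [h0]
  by_cases hA : (∀ x y, s.rel x y → (x ∈ A ↔ y ∈ A)) ∧ s.lab ⊆ A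
  · obtain ⟨hA, hsA⟩ := hA
    have h1 : ∀ t : LPart α,
        (if t.lab = A ∧ s ≤ t ∧ t.AtMostOneUnlab then mobius t t.piStar else 0)
        = if s.collapse A hA ≤ t ∧ t ≤ (s.collapse A hA).piStar then
            mobius t (s.collapse A hA).piStar else 0 := by
      intro t
      simp only [mem_collapse s A hA hsA t]
      split_ifs with h
      · rw [piStar_collapse s A hA t h.1 h.2]
      · rfl
    simp_rw [h1]
    rw [mobius_sum_left]
    have h2 : s.collapse A hA = (s.collapse A hA).piStar ↔ (A = s.lab ∧ s.OneLab) := by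
      constructor
      · intro h
        have h3 : ∀ a ∈ A, ∀ b ∈ A, s.rel a b := by
          intro a ha b hb
          have : (s.collapse A hA).rel a b := by
            rw [h]
            exact Or.inr ⟨ha, hb⟩
          rcases this with h | h
          · exact h
          · exact absurd ha h.1
        obtain ⟨x, hx⟩ := hs
        refine ⟨le_antisymm (fun a ha => (s.lab_mem (h3 a ha x (hsA hx))).2 hx) hsA,
          ⟨x, hx⟩, fun a ha b hb => h3 a (hsA ha) b (hsA hb)⟩
      · rintro ⟨rfl, h⟩
        refine ext' (fun a b => ?_) rfl
        constructor
        · exact Or.inl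
        · rintro (h1 | ⟨ha, hb⟩)
          · exact h1
          · exact Or.inl (h.2 a ha b hb)
    simp only [h2]
    unfold m
    by_cases h3 : A = s.lab <;> simp [h3]
  · rw [if_neg]
    · refine Finset.sum_eq_zero fun t _ => if_neg ?_
      rintro ⟨rfl, h1, _⟩
      exact hA ⟨fun x y hxy => t.lab_mem (h1.1 hxy), h1.2⟩
    · rintro rfl
      exact hA ⟨fun x y hxy => s.lab_mem hxy, subset_rfl⟩

lemma sum_gval [Finite α] (s : LPart α) (hs : s.lab.Nonempty) :
    (∑ t : LPart α, if s ≤ t then gval t else 0) = s.m := by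
  haveI : Fintype α := Fintype.ofFinite α
  have h : ∀ t : LPart α, (if s ≤ t then gval t else 0)
      = ∑ A : Set α, if t.lab = A ∧ s ≤ t then gval t else 0 := by
    intro t
    by_cases h1 : s ≤ t <;> simp [h1]
  simp_rw [h]
  rw [Finset.sum_comm]
  simp_rw [sum_gval_fiber s hs]
  simp

end LPart

lemma lamda_eq_gval {α : Type*} [Finite α] (K : Set α) (π : LStates α K) :
    lamda K π.1 = π.1.gval := by
  rw [← mobius_inversion LPart.gval LPart.m π.1
    fun s hs => LPart.sum_gval s (π.2.2.mono hs.2)]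
  unfold lamda
  symm
  refine Finset.sum_bij_ne_zero (fun s _ hs => ⟨s, ?_⟩) ?_ ?_ ?_ ?_
  · have h : π.1 ≤ s := by
      by_contra h
      exact hs (if_neg h)
    exact ⟨π.2.1.trans h, π.2.2.mono h.2⟩
  · intros
    exact Finset.mem_univ _
  · intro a _ _ b _ _ hab
    exact congrArg Subtype.val hab
  · intro b _ hb
    exact ⟨b.1, Finset.mem_univ _, hb, rfl⟩
  · intros
    rfl

/-- The set `Π_l(X,π_X)₀ = {π ∈ Π_l(X,π_X) : λ(π) ≠ 0}` consists exactly of the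
labelled set partitions in `Π_l(X,π_X)` with at most one unlabelled block, and on it
`λ(π) = μ_{Π_l(X)}(π, π*)`. -/
theorem lamda_ne_zero_iff_and_eq_mobius_piStar {α : Type*} [Fintype α] (K : Set α) :
    (∀ π : LStates α K, lamda K π.1 ≠ 0 ↔ π.1.AtMostOneUnlab) ∧
      ∀ π : LStates α K, lamda K π.1 ≠ 0 → lamda K π.1 = mobius π.1 π.1.piStar := by
  have h : ∀ π : LStates α K, lamda K π.1 ≠ 0 ↔ π.1.AtMostOneUnlab := by
    intro π
    rw [lamda_eq_gval]
    unfold LPart.gval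
    split_ifs with h
    · exact iff_of_true (LPart.mobius_piStar_ne_zero π.1 π.2.2) h
    · exact iff_of_false (fun h' => h' rfl) h
  refine ⟨h, fun π hπ => ?_⟩
  rw [lamda_eq_gval]
  exact if_pos ((h π).1 hπ)

end
end

section
/- Let X be an n-element set with n ≥ 1. In the lattice Π_l(X) of labelled set partitions of X, μ_{Π_l(X)}(σ_n, 1̂_l) = (−1)^{n−1}(n−1)! and μ_{Π_l(X)}(0̂_l, 1̂_l) = (−1)^n (n−1)!, where σ_n is the partition of X into labelled singleton blocks, 0̂_l is the partition into unlabelled singleton blocks, and 1̂_l is the single labelled block X∪{l}. -/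
open scoped Classical

noncomputable section

/-- The maximum `1̂_l` of `Π_l(X)`: the single labelled block `X ∪ {l}`. -/
def LPart.topL (α : Type*) : LPart α := ⟨⊤, Set.univ, fun _ _ _ => Iff.rfl⟩

/-- `σ_n`: the labelled set partition of `X` into labelled singleton blocks. -/
def LPart.sigmaN (α : Type*) : LPart α := LPart.piX Set.univ

/-- `0̂_l`: the labelled set partition of `X` into unlabelled singleton blocks,
the minimum of `Π_l(X)`. -/
def LPart.botL (α : Type*) : LPart α := LPart.piX ∅

/-! ## Helper lemmas -/

/-- Coefficient of `X` in the falling factorial. -/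
theorem aux_eval (n : ℕ) :
    (descPochhammer ℝ n).eval (-1) = (-1) ^ n * (Nat.factorial n : ℝ) := by
  induction n with
  | zero => simp
  | succ n ih =>
    rw [descPochhammer_succ_eval, ih, Nat.factorial_succ]
    push_cast
    ring

theorem aux_coeff (n : ℕ) :
    (descPochhammer ℝ (n + 1)).coeff 1 = (-1) ^ n * (Nat.factorial n : ℝ) := by
  rw [descPochhammer_succ_left, Polynomial.coeff_X_mul, Polynomial.coeff_zero_eq_eval_zero,
    Polynomial.eval_comp]
  simpa using aux_eval n

/-- Maps with kernel exactly `τ` correspond to embeddings of the quotient. -/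
def kerEmb {α β : Type*} (τ : Setoid α) :
    {f : α → β // Setoid.ker f = τ} ≃ (Quotient τ ↪ β) where
  toFun f := ⟨Quotient.lift f.1 (fun a b h => by
      have := f.2
      have h' : τ a b := h
      rw [← this] at h'
      exact h'), by
    intro a b
    induction a using Quotient.inductionOn
    induction b using Quotient.inductionOn
    intro h
    apply Quotient.sound
    have := f.2
    change τ _ _
    rw [← this]
    exact h⟩
  invFun g := ⟨fun a => g (Quotient.mk τ a), by
    ext a b
    rw [Setoid.ker_def, g.injective.eq_iff]
    exact Quotient.eq⟩
  left_inv f := by ext; rfl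
  right_inv g := by
    ext a
    induction a using Quotient.inductionOn
    rfl

instance setoidFintype {α : Type*} [Finite α] : Fintype (Setoid α) := Fintype.ofFinite _

theorem aux_count {α : Type*} [Fintype α] (ρ : Setoid α) (x : ℕ) :
    x ^ Fintype.card (Quotient ρ) =
      ∑ τ ∈ Finset.univ.filter (fun τ : Setoid α => ρ ≤ τ),
        x.descFactorial (Fintype.card (Quotient τ)) := by
  have h1 : Fintype.card {f : α → Fin x // ρ ≤ Setoid.ker f} =
      x ^ Fintype.card (Quotient ρ) := by
    rw [Fintype.card_congr (Setoid.liftEquiv ρ)]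
    simp
  rw [← h1, Fintype.card_subtype]
  rw [Finset.card_eq_sum_card_fiberwise (f := fun f : α → Fin x => Setoid.ker f)
    (t := Finset.univ.filter (fun τ : Setoid α => ρ ≤ τ))]
  · refine Finset.sum_congr rfl fun τ hτ => ?_
    have h2 : Fintype.card {f : α → Fin x // Setoid.ker f = τ} =
        x.descFactorial (Fintype.card (Quotient τ)) := by
      rw [Fintype.card_congr (kerEmb τ), Fintype.card_embedding_eq]
      simp
    rw [← h2, Fintype.card_subtype, Finset.filter_filter]
    congr 1
    ext f
    simp only [Finset.mem_filter, Finset.mem_univ, true_and] at hτ ⊢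
    constructor
    · exact fun h => h.2
    · exact fun h => ⟨h ▸ hτ, h⟩
  · intro f hf
    simpa using hf

theorem aux_poly {α : Type*} [Fintype α] (ρ : Setoid α) :
    (Polynomial.X : Polynomial ℝ) ^ Fintype.card (Quotient ρ) =
      ∑ τ ∈ Finset.univ.filter (fun τ : Setoid α => ρ ≤ τ),
        descPochhammer ℝ (Fintype.card (Quotient τ)) := by
  apply Polynomial.eq_of_infinite_eval_eq
  refine (Set.infinite_range_of_injective (Nat.cast_injective (R := ℝ))).mono ?_
  rintro _ ⟨x, rfl⟩
  simp only [Set.mem_ofPred_eq, Polynomial.eval_pow, Polynomial.eval_X, Polynomial.eval_finsetSum,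
    descPochhammer_eval_eq_descFactorial]
  exact_mod_cast aux_count ρ x

/-- The Möbius value `μ(τ, ⊤)` in the partition lattice. -/
def gfun {α : Type*} [Fintype α] (τ : Setoid α) : ℝ :=
  (descPochhammer ℝ (Fintype.card (Quotient τ))).coeff 1

theorem gfun_sum {α : Type*} [Fintype α] [Nonempty α] (ρ : Setoid α) :
    ∑ τ ∈ Finset.univ.filter (fun τ : Setoid α => ρ ≤ τ), gfun τ = if ρ = ⊤ then 1 else 0 := by
  have h := congrArg (fun p : Polynomial ℝ => p.coeff 1) (aux_poly ρ)
  simp only [Polynomial.coeff_X_pow, Polynomial.finsetSum_coeff] at h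
  unfold gfun
  rw [← h]
  congr 1
  rw [← Quotient.subsingleton_iff, ← Fintype.card_le_one_iff_subsingleton, eq_iff_iff]
  have : 0 < Fintype.card (Quotient ρ) :=
    Fintype.card_pos_iff.2 ⟨Quotient.mk ρ (Classical.arbitrary α)⟩
  omega

theorem mobius_unique {P : Type*} [Fintype P] [PartialOrder P] (t : P) (ht : ∀ x, x ≤ t)
    (f : P → ℝ)
    (h : ∀ x, ∑ y ∈ Finset.univ.filter (fun y => x ≤ y), f y = if x = t then 1 else 0) (x : P) :
    mobius x t = f x := by
  let : LocallyFiniteOrder P := Fintype.toLocallyFiniteOrder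
  let : OrderTop P := { top := t, le_top := ht }
  have key := IncidenceAlgebra.moebius_inversion_top (𝕜 := ℝ) f
    (fun x => if x = t then 1 else 0) (fun x => by
      rw [← h x]
      refine Finset.sum_congr ?_ fun _ _ => rfl
      ext y
      simp) x
  rw [key]
  simp only [mul_ite, mul_one, mul_zero]
  rw [Finset.sum_ite_eq' , if_pos (by simpa using ht x)]
  rfl

theorem sum_full {α : Type*} [Fintype α] (π : LPart α) (g : Setoid α → ℝ) :
    ∑ σ ∈ Finset.univ.filter (fun σ : LPart α => π ≤ σ),
      (if σ.lab = Set.univ then g σ.rel else 0) =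
    ∑ τ ∈ Finset.univ.filter (fun τ : Setoid α => π.rel ≤ τ), g τ := by
  rw [← Finset.sum_filter, Finset.filter_filter]
  refine Finset.sum_bij' (fun σ _ => σ.rel) (fun τ _ => ⟨τ, Set.univ, fun _ _ _ => Iff.rfl⟩)
    ?_ ?_ ?_ ?_ ?_
  · intro σ hσ
    simp only [Finset.mem_filter, Finset.mem_univ, true_and] at hσ ⊢
    exact hσ.1.1
  · intro τ hτ
    simp only [Finset.mem_filter, Finset.mem_univ, true_and] at hτ ⊢
    exact ⟨⟨hτ, Set.subset_univ _⟩, trivial⟩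
  · intro σ hσ
    simp only [Finset.mem_filter, Finset.mem_univ, true_and] at hσ
    exact LPart.ext rfl hσ.2.symm
  · intro τ hτ
    rfl
  · intro σ hσ
    rfl

theorem sum_none {α : Type*} [Fintype α] (π : LPart α) (hπ : π.lab = ∅) (g : Setoid α → ℝ) :
    ∑ σ ∈ Finset.univ.filter (fun σ : LPart α => π ≤ σ),
      (if σ.lab = ∅ then g σ.rel else 0) =
    ∑ τ ∈ Finset.univ.filter (fun τ : Setoid α => π.rel ≤ τ), g τ := by
  rw [← Finset.sum_filter, Finset.filter_filter]
  refine Finset.sum_bij' (fun σ _ => σ.rel) (fun τ _ => ⟨τ, ∅, fun _ _ _ => Iff.rfl⟩)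
    ?_ ?_ ?_ ?_ ?_
  · intro σ hσ
    simp only [Finset.mem_filter, Finset.mem_univ, true_and] at hσ ⊢
    exact hσ.1.1
  · intro τ hτ
    simp only [Finset.mem_filter, Finset.mem_univ, true_and] at hτ ⊢
    exact ⟨⟨hτ, hπ.le⟩, trivial⟩
  · intro σ hσ
    simp only [Finset.mem_filter, Finset.mem_univ, true_and] at hσ
    exact LPart.ext rfl hσ.2.symm
  · intro τ hτ
    rfl
  · intro σ hσ
    rfl

theorem mobius_formula {α : Type*} [Fintype α] [Nonempty α] (π : LPart α) :
    mobius π (LPart.topL α) =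
      (if π.lab = Set.univ then gfun π.rel else 0) - (if π.lab = ∅ then gfun π.rel else 0) := by
  refine mobius_unique (LPart.topL α) (fun x => ?_)
    (fun π : LPart α => (if π.lab = Set.univ then gfun π.rel else 0) -
      (if π.lab = ∅ then gfun π.rel else 0)) ?_ π
  · have h1 : x.rel ≤ (⊤ : Setoid α) := le_top
    exact And.intro h1 (Set.subset_univ x.lab)
  intro π
  rw [Finset.sum_sub_distrib, sum_full, gfun_sum]
  by_cases hπ : π.lab = ∅
  · rw [sum_none π hπ, gfun_sum, sub_self, if_neg]
    rintro rfl
    exact Set.univ_nonempty.ne_empty hπ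
  · rw [Finset.sum_eq_zero, sub_zero]
    · congr 1
      rw [eq_iff_iff]
      constructor
      · intro h
        refine LPart.ext h ?_
        obtain ⟨y, hy⟩ := Set.nonempty_iff_ne_empty.2 hπ
        refine Set.eq_univ_of_forall fun x => (π.lab_mem (x := x) (y := y) ?_).2 hy
        rw [h]
        trivial
      · rintro rfl
        rfl
    · intro σ hσ
      simp only [Finset.mem_filter, Finset.mem_univ, true_and] at hσ
      rw [if_neg]
      intro h
      exact hπ (Set.subset_empty_iff.1 (h ▸ hσ.2))

theorem gfun_bot {α : Type*} [Fintype α] [Nonempty α] :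
    gfun (⊥ : Setoid α) =
      (-1) ^ (Fintype.card α - 1) * (Nat.factorial (Fintype.card α - 1) : ℝ) := by
  unfold gfun
  rw [Fintype.card_congr (Setoid.quotientBotEquiv (α := α))]
  have : 0 < Fintype.card α := Fintype.card_pos
  obtain ⟨n, hn⟩ : ∃ n, Fintype.card α = n + 1 := ⟨Fintype.card α - 1, by omega⟩
  rw [hn]
  exact aux_coeff n

/-- In the lattice `Π_l(X)` of labelled set partitions of an `n`-element set `X` (`n ≥ 1`),
`μ(σ_n, 1̂_l) = (-1)^(n-1) (n-1)!` and `μ(0̂_l, 1̂_l) = (-1)^n (n-1)!`. -/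
theorem mobius_labelled_partition_lattice {α : Type*} [Fintype α] [Nonempty α] :
    mobius (LPart.sigmaN α) (LPart.topL α) =
        (-1) ^ (Fintype.card α - 1) * (Nat.factorial (Fintype.card α - 1) : ℝ) ∧
      mobius (LPart.botL α) (LPart.topL α) =
        (-1) ^ (Fintype.card α) * (Nat.factorial (Fintype.card α - 1) : ℝ) := by
  have hne : (Set.univ : Set α) ≠ ∅ := Set.univ_nonempty.ne_empty
  constructor
  · rw [mobius_formula, ← gfun_bot]
    simp [LPart.sigmaN, LPart.piX]
  · rw [mobius_formula]
    have hc : 0 < Fintype.card α := Fintype.card_pos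
    have h : (-1 : ℝ) ^ (Fintype.card α) = - (-1) ^ (Fintype.card α - 1) := by
      obtain ⟨n, hn⟩ : ∃ n, Fintype.card α = n + 1 := ⟨Fintype.card α - 1, by omega⟩
      rw [hn, Nat.add_sub_cancel, pow_succ]
      ring
    rw [h, neg_mul, ← gfun_bot]
    simp [LPart.botL, LPart.piX, hne.symm]

end
end

section
/- Let X be a finite set and σ, π ∈ Π_l(X) with σ ≤ π and π = B₁L₁|…|B_kL_k. Then the interval [σ,π] in Π_l(X) is order-isomorphic to the product order ∏_{i=1}^{k} [σ ⊓ B_i, B_iL_i], where the i-th factor is an interval in the lattice Π_l(B_i) of labelled set partitions of B_i. -/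
open scoped Classical

noncomputable section

/-- The restriction `τ ⊓ B` of a labelled set partition `τ` of `α` to a subset `B ⊆ α`:
its blocks are the nonempty intersections of blocks of `τ` with `B`, keeping their labels. -/
def LPart.restrict {α : Type*} (τ : LPart α) (B : Set α) : LPart B where
  rel := Setoid.comap Subtype.val τ.rel
  lab := {a : B | (a : α) ∈ τ.lab}
  lab_mem := fun x y h => τ.lab_mem ((Setoid.comap_rel _ _ _ _).1 h)

/-- The block of `π` indexed by the class `c` (as a subset of `α`). -/
def LPart.blockOf {α : Type*} (π : LPart α) (c : Quotient π.rel) : Set α :=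
  {x : α | Quotient.mk π.rel x = c}

/-- Glue a family of labelled partitions of the blocks of `π`. -/
def LPart.glue {α : Type*} (π : LPart α)
    (f : ∀ c : Quotient π.rel, LPart (π.blockOf c)) : LPart α where
  rel :=
    { r := fun x y => ∃ c, ∃ (hx : x ∈ π.blockOf c) (hy : y ∈ π.blockOf c),
        (f c).rel ⟨x, hx⟩ ⟨y, hy⟩
      iseqv :=
        { refl := fun x => ⟨Quotient.mk π.rel x, rfl, rfl, (f _).rel.refl' _⟩
          symm := by
            rintro x y ⟨c, hx, hy, hr⟩
            exact ⟨c, hy, hx, (f c).rel.symm' hr⟩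
          trans := by
            rintro x y z ⟨c, hx, hy, hr⟩ ⟨d, hy', hz, hr'⟩
            have hcd : c = d := Eq.trans (Eq.symm hy) hy'
            subst hcd
            exact ⟨c, hx, hz, (f c).rel.trans' hr hr'⟩ } }
  lab := {x | ∃ c, ∃ hx : x ∈ π.blockOf c, (⟨x, hx⟩ : π.blockOf c) ∈ (f c).lab}
  lab_mem := by
    rintro x y ⟨c, hx, hy, hr⟩
    constructor
    · rintro ⟨d, hx', hl⟩
      have hcd : c = d := Eq.trans (Eq.symm hx) hx'
      subst hcd
      exact ⟨c, hy, ((f c).lab_mem hr).1 hl⟩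
    · rintro ⟨d, hy', hl⟩
      have hcd : c = d := Eq.trans (Eq.symm hy) hy'
      subst hcd
      exact ⟨c, hx, ((f c).lab_mem hr).2 hl⟩

theorem LPart.restrict_mono {α : Type*} {σ τ : LPart α} (h : σ ≤ τ) (B : Set α) :
    σ.restrict B ≤ τ.restrict B :=
  ⟨fun _ _ hr => h.1 hr, fun _ hl => h.2 hl⟩

/-- An element below `π` is below `τ` as soon as its restrictions to the blocks of `π` are. -/
theorem LPart.le_of_restrict {α : Type*} {π σ τ : LPart α} (h : σ ≤ π)
    (H : ∀ c, σ.restrict (π.blockOf c) ≤ τ.restrict (π.blockOf c)) : σ ≤ τ := by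
  constructor
  · intro x y hr
    have hxy : y ∈ π.blockOf (Quotient.mk π.rel x) :=
      Quotient.sound (π.rel.symm' (h.1 hr))
    exact (H (Quotient.mk π.rel x)).1 (x := ⟨x, rfl⟩) (y := ⟨y, hxy⟩) hr
  · intro x hl
    have hx : (⟨x, rfl⟩ : π.blockOf (Quotient.mk π.rel x)) ∈
        (σ.restrict (π.blockOf (Quotient.mk π.rel x))).lab := hl
    exact (H (Quotient.mk π.rel x)).2 hx

theorem LPart.glue_restrict {α : Type*} (π : LPart α)
    (f : ∀ c : Quotient π.rel, LPart (π.blockOf c)) (c : Quotient π.rel) :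
    (π.glue f).restrict (π.blockOf c) = f c := by
  apply le_antisymm
  · constructor
    · rintro ⟨x, hx⟩ ⟨y, hy⟩ ⟨d, hx', hy', hr⟩
      have hcd : c = d := Eq.trans (Eq.symm hx) hx'
      subst hcd
      exact hr
    · rintro ⟨x, hx⟩ ⟨d, hx', hl⟩
      have hcd : c = d := Eq.trans (Eq.symm hx) hx'
      subst hcd
      exact hl
  · exact ⟨fun x y hr => ⟨c, x.2, y.2, hr⟩, fun x hl => ⟨c, x.2, hl⟩⟩

theorem LPart.glue_le {α : Type*} (π : LPart α)
    (f : ∀ c : Quotient π.rel, LPart (π.blockOf c))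
    (hf : ∀ c, f c ≤ π.restrict (π.blockOf c)) : π.glue f ≤ π := by
  constructor
  · rintro x y ⟨c, hx, hy, hr⟩
    exact (hf c).1 hr
  · rintro x ⟨c, hx, hl⟩
    exact (hf c).2 hl

/-- For `σ ≤ π` in `Π_l(X)`, the interval `[σ, π]` is order-isomorphic to the product order
`∏_i [σ ⊓ B_i, B_i L_i]` over the blocks `B_i` of `π`, the `i`-th factor being an interval
in `Π_l(B_i)` (its top `B_i L_i` is the one-block labelled partition `π ⊓ B_i` of `B_i`). -/
theorem interval_orderIso_pi_blocks {α : Type*} [Fintype α] (σ π : LPart α) (h : σ ≤ π) :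
    Nonempty ((Set.Icc σ π) ≃o
      ∀ c : Quotient π.rel,
        Set.Icc (σ.restrict (π.blockOf c)) (π.restrict (π.blockOf c))) := by
  have hg : ∀ f : (∀ c : Quotient π.rel,
      Set.Icc (σ.restrict (π.blockOf c)) (π.restrict (π.blockOf c))),
      π.glue (fun c => (f c).1) ≤ π := fun f => LPart.glue_le π _ fun c => (f c).2.2
  refine ⟨⟨⟨fun τ c => ⟨τ.1.restrict _, LPart.restrict_mono τ.2.1 _,
      LPart.restrict_mono τ.2.2 _⟩,
    fun f => ⟨π.glue fun c => (f c).1, LPart.le_of_restrict h fun c => ?_, hg f⟩, ?_, ?_⟩, ?_⟩⟩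
  · rw [LPart.glue_restrict]
    exact (f c).2.1
  · intro τ
    apply Subtype.ext
    have hle : π.glue (fun c => τ.1.restrict (π.blockOf c)) ≤ π :=
      LPart.glue_le π _ fun c => LPart.restrict_mono τ.2.2 _
    exact le_antisymm
      (LPart.le_of_restrict hle fun c => (LPart.glue_restrict π _ c).le)
      (LPart.le_of_restrict τ.2.2 fun c => (LPart.glue_restrict π (fun c => τ.1.restrict (π.blockOf c)) c).ge)
  · intro f
    funext c
    exact Subtype.ext (LPart.glue_restrict π _ c)
  · intro a b
    constructor
    · intro H
      exact LPart.le_of_restrict a.2.2 fun c => H c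
    · intro H c
      exact LPart.restrict_mono H _

end
end
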